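/- Let x = Σ_{w∈F} f_w T_w^{(1)} ∈ C_c(W, ℓ^∞(W)) with F ⊆ W finite and f_w ∈ ℓ^∞(W), and let 0 < κ ≤ 1. Then the Schur multiplier m_κ(x) exists, equals Σ_{w∈F} κ^{ℓ(w)} f_w T_w^{(1)} ∈ C_c(W, ℓ^∞(W)), its commutator [D_S, m_κ(x)] exists and equals m_κ([D_S, x]), and ‖[D_S, m_κ(x)]‖ ≤ ‖[D_S, x]‖. -/

import Mathlib

/-!
The kernel `(u, v) ↦ ℓ(u v⁻¹)` is the number of reflections separating `u` from `v`: it is the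
cardinality of the symmetric difference of the sets of right inversions of `u` and of `v`. Hence
`κ ^ ℓ(u v⁻¹)` is a product, over all reflections `t`, of kernels with value `1` if `t` does not
separate `u` from `v` and `κ` otherwise. Each factor is the convex combination
`(1 + κ) / 2 + (1 - κ) / 2 * σ u * σ v` with `σ = ±1`, so its Schur multiplier is a convex
combination of `y` and `D y D` with `D` diagonal of norm `1`, and is contractive. Products and
pointwise limits of contractive Schur multipliers are contractive, so `m_κ` is a contraction defined
on all bounded operators. Finally, the commutator with `D_S` also acts entrywise on matrix
coefficients, so it commutes with `m_κ`.

Separation is counted with Bourbaki's action of `W` on `W × ZMod 2`, in which a simple reflection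
`s` maps `(t, ε)` to `(s t s, ε + [t = s])`: the second coordinate records the parity of the number
of occurrences of `t` in the right inversion sequence of a word.
-/

noncomputable section

open scoped InnerProductSpace ComplexOrder

/-- The Hilbert space ℓ²(W) of square-summable complex functions on `W`. -/
abbrev l2 (W : Type*) := lp (fun _ : W => ℂ) 2

/-- The canonical orthonormal basis vector δ_w of ℓ²(W). -/
def delta {W : Type*} [DecidableEq W] (w : W) : l2 W := lp.single 2 w (1 : ℂ)

/-- Bounded operators on ℓ²(W). -/
abbrev Op (W : Type*) := l2 W →L[ℂ] l2 W

/-- `C` is the commutator `[D_S, x]` of `x` with the Dirac operator `D_S = Σ_n n P_n`: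
the bounded operator with matrix coefficients ⟨Cδ_v, δ_u⟩ = (ℓ(u) − ℓ(v))⟨xδ_v, δ_u⟩. -/
def IsCommutatorDS {B W : Type*} [Group W] [DecidableEq W] {M : CoxeterMatrix B}
    (cs : CoxeterSystem M W) (x C : Op W) : Prop :=
  ∀ v u : W, ⟪C (delta v), delta u⟫_ℂ =
    ((cs.length u : ℂ) - (cs.length v : ℂ)) * ⟪x (delta v), delta u⟫_ℂ

/-- `My` is the Schur multiplier m_κ(y): the bounded operator with matrix coefficients
⟨m_κ(y)δ_v, δ_u⟩ = κ^{ℓ(uv⁻¹)} ⟨yδ_v, δ_u⟩. -/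
def IsSchur {B W : Type*} [Group W] [DecidableEq W] {M : CoxeterMatrix B}
    (cs : CoxeterSystem M W) (κ : ℝ) (y My : Op W) : Prop :=
  ∀ u v : W, ⟪My (delta v), delta u⟫_ℂ =
    (κ : ℂ) ^ (cs.length (u * v⁻¹)) * ⟪y (delta v), delta u⟫_ℂ

open Filter
open scoped Topology symmDiff

/-! ### Inversions and word length -/

section Inversions

variable {B W : Type*} [Group W] {M : CoxeterMatrix B} (cs : CoxeterSystem M W)

theorem reverse_alternatingWord_two_mul (i j : B) (m : ℕ) :
    (CoxeterSystem.alternatingWord i j (2 * m)).reverse =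
      CoxeterSystem.alternatingWord j i (2 * m) := by
  refine List.ext_getElem (by simp) fun k hk _ => ?_
  rw [List.length_reverse, CoxeterSystem.length_alternatingWord] at hk
  simp only [List.getElem_reverse, CoxeterSystem.length_alternatingWord]
  rw [CoxeterSystem.getElem_alternatingWord _ _ _ _ (by lia),
    CoxeterSystem.getElem_alternatingWord _ _ _ _ hk]
  grind

theorem prod_map_alternatingWord_two_mul {G : Type*} [Monoid G] (f : B → G) (i j : B) (m : ℕ) :
    ((CoxeterSystem.alternatingWord i j (2 * m)).map f).prod = (f i * f j) ^ m := by
  induction m with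
  | zero => simp [CoxeterSystem.alternatingWord]
  | succ m ih =>
    rw [mul_add_one, CoxeterSystem.alternatingWord_succ', CoxeterSystem.alternatingWord_succ']
    simp [ih, pow_succ', mul_assoc, parity_simps]

theorem wordProd_alternatingWord_add_two_mul (i j : B) (k : ℕ) :
    cs.wordProd (CoxeterSystem.alternatingWord i j (k + 2 * M i j)) =
      cs.wordProd (CoxeterSystem.alternatingWord i j k) := by
  simp [cs.prod_alternatingWord_eq_mul_pow, Nat.add_mul_div_left, pow_add, parity_simps]

section Parity

variable [DecidableEq W]

theorem even_count_rightInvSeq_alternatingWord (i j : B) (t : W) :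
    Even ((cs.rightInvSeq (CoxeterSystem.alternatingWord i j (2 * M i j))).count t) := by
  rw [← reverse_alternatingWord_two_mul, cs.rightInvSeq_reverse, List.count_reverse]
  set L := cs.leftInvSeq (CoxeterSystem.alternatingWord j i (2 * M i j))
  have hperiod : L.drop (M i j) = L.take (M i j) := by
    refine List.ext_getElem (by simp [L]; lia) fun k _ hk => ?_
    have hk : k < M i j := by simp at hk; lia
    rw [List.getElem_drop, List.getElem_take,
      cs.getElem_leftInvSeq_alternatingWord _ _ _ _ (by lia),
      cs.getElem_leftInvSeq_alternatingWord _ _ _ _ (by lia),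
      show 2 * (M i j + k) + 1 = 2 * k + 1 + 2 * M i j by ring,
      wordProd_alternatingWord_add_two_mul]
  rw [← L.take_append_drop (M i j), hperiod, List.count_append]
  exact Even.add_self _

/-- The action of the simple reflection `s` on `W × ZMod 2`, sending `(t, ε)` to
`(s t s, ε + [t = s])`. It defines the action of `W` by which `inversionParity` is a function of the
group element rather than of a word. All of `W` is used in place of the set of reflections. -/
def reflectionAction (i : B) : Function.End (W × ZMod 2) := fun p =>
  (cs.simple i * p.1 * cs.simple i, p.2 + if p.1 = cs.simple i then 1 else 0)

theorem prod_map_reflectionAction_apply (ω : List B) (t : W) (ε : ZMod 2) :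
    (ω.map (reflectionAction cs)).prod • (t, ε) =
      (cs.wordProd ω * t * (cs.wordProd ω)⁻¹, ε + ((cs.rightInvSeq ω).count t : ZMod 2)) := by
  induction ω with
  | nil => simp
  | cons i ω ih =>
    have hconj : cs.wordProd ω * (t * (cs.wordProd ω)⁻¹) = cs.simple i ↔
        (cs.wordProd ω)⁻¹ * (cs.simple i * cs.wordProd ω) = t := by
      rw [← mul_assoc, mul_inv_eq_iff_eq_mul, inv_mul_eq_iff_eq_mul, eq_comm]
    rw [List.map_cons, List.prod_cons, mul_smul, ih]
    simp [Function.End.smul_def, reflectionAction, CoxeterSystem.rightInvSeq, List.count_cons,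
      cs.wordProd_cons, hconj, mul_assoc, add_assoc]

theorem reflectionAction_isLiftable : M.IsLiftable (reflectionAction cs) := by
  intro i j
  refine FaithfulSMul.eq_of_smul_eq_smul (α := W × ZMod 2) fun ⟨t, ε⟩ => ?_
  have hcount := (even_count_rightInvSeq_alternatingWord cs i j t).natCast_zmod_two
  rw [← prod_map_alternatingWord_two_mul, prod_map_reflectionAction_apply, hcount]
  simp [cs.prod_alternatingWord_eq_mul_pow]

/-- The parity of the number of occurrences of `t` in the right inversion sequence of a word for
`w`: it is `1` if `t` is a right inversion of `w`, and `0` otherwise. -/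
def inversionParity (w t : W) : ZMod 2 :=
  (cs.lift ⟨reflectionAction cs, reflectionAction_isLiftable cs⟩ w • (t, (0 : ZMod 2))).2

theorem lift_reflectionAction_wordProd (ω : List B) :
    cs.lift ⟨reflectionAction cs, reflectionAction_isLiftable cs⟩ (cs.wordProd ω) =
      (ω.map (reflectionAction cs)).prod := by
  rw [CoxeterSystem.wordProd, map_list_prod, List.map_map]
  congr 2
  ext1 i
  exact cs.lift_apply_simple _ i

theorem inversionParity_wordProd (ω : List B) (t : W) :
    inversionParity cs (cs.wordProd ω) t = (cs.rightInvSeq ω).count t := by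
  rw [inversionParity, lift_reflectionAction_wordProd, prod_map_reflectionAction_apply, zero_add]

theorem lift_reflectionAction_apply (w t : W) (ε : ZMod 2) :
    cs.lift ⟨reflectionAction cs, reflectionAction_isLiftable cs⟩ w • (t, ε) =
      (w * t * w⁻¹, ε + inversionParity cs w t) := by
  obtain ⟨ω, rfl⟩ := cs.wordProd_surjective w
  rw [inversionParity_wordProd, lift_reflectionAction_wordProd, prod_map_reflectionAction_apply]

theorem inversionParity_mul (u v t : W) :
    inversionParity cs (u * v) t =
      inversionParity cs v t + inversionParity cs u (v * t * v⁻¹) := by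
  rw [inversionParity, map_mul, mul_smul,
    lift_reflectionAction_apply, lift_reflectionAction_apply, zero_add]

theorem inversionParity_one (t : W) : inversionParity cs 1 t = 0 := by
  simpa using inversionParity_wordProd cs [] t

variable {cs} in
theorem inversionParity_self {t : W} (ht : cs.IsReflection t) : inversionParity cs t t = 1 := by
  obtain ⟨g, i, rfl⟩ := ht
  have hsimple : inversionParity cs (cs.simple i) (cs.simple i) = 1 := by
    simpa using inversionParity_wordProd cs [i] (cs.simple i)
  have hcancel := inversionParity_mul cs g g⁻¹ (g * cs.simple i * g⁻¹)
  rw [mul_inv_cancel, inversionParity_one] at hcancel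
  rw [inversionParity_mul, inversionParity_mul]
  simp only [mul_assoc, inv_mul_cancel_left, inv_inv, inv_mul_cancel, mul_one,
    mul_inv_cancel, hsimple] at hcancel ⊢
  grind

theorem inversionParity_ne_zero_iff (w t : W) :
    inversionParity cs w t ≠ 0 ↔ cs.IsRightInversion w t := by
  have of_ne_zero (w : W) (h : inversionParity cs w t ≠ 0) : cs.IsRightInversion w t := by
    obtain ⟨ω, hω, rfl⟩ := cs.exists_isReduced w
    rw [inversionParity_wordProd] at h
    refine cs.isRightInversion_of_mem_rightInvSeq hω (by_contra fun hmem => h ?_)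
    rw [List.count_eq_zero_of_not_mem hmem, Nat.cast_zero]
  refine ⟨of_ne_zero w, fun ht h0 => ?_⟩
  refine ht.1.isRightInversion_mul_left_iff.1 (of_ne_zero (w * t) ?_) ht
  simp [inversionParity_mul, inversionParity_self ht.1, h0]

end Parity

theorem encard_setOf_isRightInversion (w : W) :
    {t | cs.IsRightInversion w t}.encard = cs.length w := by
  classical
  obtain ⟨ω, hω, rfl⟩ := cs.exists_isReduced w
  have hmem : {t | cs.IsRightInversion (cs.wordProd ω) t} = (cs.rightInvSeq ω).toFinset := by
    ext t
    rw [Set.mem_ofPred_eq, ← inversionParity_ne_zero_iff, inversionParity_wordProd,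
      hω.nodup_rightInvSeq.count]
    simp
  rw [hmem, Set.encard_coe_eq_coe_finsetCard, List.toFinset_card_of_nodup hω.nodup_rightInvSeq,
    cs.length_rightInvSeq, hω.eq]

theorem encard_symmDiff_isRightInversion (u v : W) :
    ({t | cs.IsRightInversion u t} ∆ {t | cs.IsRightInversion v t}).encard =
      cs.length (u * v⁻¹) := by
  classical
  have hconj : {t | cs.IsRightInversion u t} ∆ {t | cs.IsRightInversion v t} =
      MulAut.conj v ⁻¹' {t | cs.IsRightInversion (u * v⁻¹) t} := by
    have hparity : ∀ a b c : ZMod 2, a = b + c →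
        (a ≠ 0 ∧ ¬b ≠ 0 ∨ b ≠ 0 ∧ ¬a ≠ 0 ↔ c ≠ 0) := by decide
    ext t
    simp only [Set.mem_symmDiff, Set.mem_preimage, Set.mem_ofPred_eq, MulAut.conj_apply,
      ← inversionParity_ne_zero_iff]
    apply hparity
    simpa using inversionParity_mul cs (u * v⁻¹) v t
  rw [hconj, Set.encard_preimage_of_bijective (MulAut.conj v).bijective,
    encard_setOf_isRightInversion]

end Inversions

/-! ### Contractive Schur multipliers -/

theorem exists_clm_tendsto_apply {ι α 𝕜 E : Type*} {G : α → Type*} {p : ENNReal} [Fact (1 ≤ p)]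
    [NontriviallyNormedField 𝕜] [SeminormedAddCommGroup E] [NormedSpace 𝕜 E]
    [∀ a, NormedAddCommGroup (G a)] [∀ a, NormedSpace 𝕜 (G a)] [∀ a, ProperSpace (G a)]
    (l : Ultrafilter ι) (T : ι → E →L[𝕜] lp G p) {K : ℝ} (hT : ∀ i, ‖T i‖ ≤ K) :
    ∃ S : E →L[𝕜] lp G p, ‖S‖ ≤ K ∧ ∀ x a, Tendsto (fun i => T i x a) l (𝓝 (S x a)) := by
  have hbound (x : E) (i : ι) : ‖T i x‖ ≤ K * ‖x‖ := (T i).le_of_opNorm_le (hT i) x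
  have hlim (x : E) (a : α) : ∃ g, Tendsto (fun i => T i x a) l (𝓝 g) := by
    have hp : p ≠ 0 := (zero_lt_one.trans_le Fact.out).ne'
    have hball (i : ι) : T i x a ∈ Metric.closedBall 0 (K * ‖x‖) :=
      mem_closedBall_zero_iff.2 ((lp.norm_apply_le_norm hp _ a).trans (hbound x i))
    obtain ⟨g, -, hg⟩ := (isCompact_closedBall 0 (K * ‖x‖)).ultrafilter_le_nhds'
      (l.map fun i => T i x a) (Ultrafilter.mem_map.2 (univ_mem' hball))
    exact ⟨g, hg⟩
  choose L hL using hlim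
  have hL_pi (x : E) : Tendsto (fun i => ⇑(T i x)) l (𝓝 (L x)) := tendsto_pi_nhds.2 (hL x)
  have hmem (x : E) : Memℓp (L x) p := by
    refine lp.memℓp_of_tendsto (isBounded_iff_forall_norm_le.2 ⟨K * ‖x‖, ?_⟩) (hL_pi x)
    exact Set.forall_mem_range.2 (hbound x)
  let S : E →ₗ[𝕜] lp G p :=
    { toFun x := ⟨L x, hmem x⟩
      map_add' x y := by
        ext a
        exact tendsto_nhds_unique (hL (x + y) a) <| by
          simpa only [map_add, lp.coeFn_add, Pi.add_apply] using (hL x a).add (hL y a)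
      map_smul' c x := by
        ext a
        exact tendsto_nhds_unique (hL (c • x) a) <| by
          simpa only [map_smul, lp.coeFn_smul, Pi.smul_apply, RingHom.id_apply] using
            (hL x a).const_smul c }
  have hS (x : E) : ‖S x‖ ≤ K * ‖x‖ :=
    lp.norm_le_of_tendsto (Eventually.of_forall (hbound x)) (hL_pi x)
  obtain ⟨i⟩ := l.neBot.nonempty
  exact ⟨S.mkContinuous K hS, S.mkContinuous_norm_le ((norm_nonneg _).trans (hT i)) hS, hL⟩

section Schur

variable {W : Type*} [DecidableEq W]

theorem delta_apply (v u : W) : delta v u = if u = v then 1 else 0 := by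
  rw [delta, lp.single_apply, Pi.single_apply]

theorem inner_delta (a : l2 W) (u : W) : ⟪a, delta u⟫_ℂ = (starRingEnd ℂ) (a u) := by
  simp [delta, lp.inner_single_right]

theorem op_ext_delta {x y : Op W} (h : ∀ v, x (delta v) = y (delta v)) : x = y :=
  lp.ext_continuousLinearMap ENNReal.ofNat_ne_top fun v => ContinuousLinearMap.ext_ring (h v)

/-- The kernel `k` is a contractive Schur multiplier: multiplying the matrix coefficients of a
bounded operator entrywise by `k` yields a bounded operator of at most the same norm. The
coefficient of `y` in row `u` and column `v` is written `y (delta v) u`, which is linear in `y`,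
whereas `⟪y (delta v), delta u⟫_ℂ` is its complex conjugate. -/
def IsSchurContraction (k : W → W → ℂ) : Prop :=
  ∀ y : Op W, ∃ z : Op W, ‖z‖ ≤ ‖y‖ ∧ ∀ u v, z (delta v) u = k u v * y (delta v) u

namespace IsSchurContraction

theorem one : IsSchurContraction (1 : W → W → ℂ) := fun y => ⟨y, le_rfl, by simp⟩

theorem mul {k₁ k₂ : W → W → ℂ} (h₁ : IsSchurContraction k₁) (h₂ : IsSchurContraction k₂) :
    IsSchurContraction (k₁ * k₂) := by
  intro y
  obtain ⟨z₂, hz₂, hk₂⟩ := h₂ y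
  obtain ⟨z₁, hz₁, hk₁⟩ := h₁ z₂
  exact ⟨z₁, hz₁.trans hz₂, fun u v => by simp [hk₁, hk₂, mul_assoc]⟩

theorem prod {ι : Type*} {k : ι → W → W → ℂ} (hk : ∀ i, IsSchurContraction (k i)) (s : Finset ι) :
    IsSchurContraction (∏ i ∈ s, k i) :=
  Finset.prod_induction k IsSchurContraction (fun _ _ => mul) one fun i _ => hk i

theorem smul_add_smul {k₁ k₂ : W → W → ℂ} (h₁ : IsSchurContraction k₁)
    (h₂ : IsSchurContraction k₂) {a b : ℂ} (hab : ‖a‖ + ‖b‖ ≤ 1) :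
    IsSchurContraction (a • k₁ + b • k₂) := by
  intro y
  obtain ⟨z₁, hz₁, hk₁⟩ := h₁ y
  obtain ⟨z₂, hz₂, hk₂⟩ := h₂ y
  refine ⟨a • z₁ + b • z₂, ?_, fun u v => ?_⟩
  · calc ‖a • z₁ + b • z₂‖ ≤ ‖a‖ * ‖z₁‖ + ‖b‖ * ‖z₂‖ := by
          simpa only [norm_smul] using norm_add_le (a • z₁) (b • z₂)
      _ ≤ ‖a‖ * ‖y‖ + ‖b‖ * ‖y‖ := by gcongr
      _ ≤ ‖y‖ := by rw [← add_mul]; exact mul_le_of_le_one_left (norm_nonneg y) hab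
  · change a * z₁ (delta v) u + b * z₂ (delta v) u = (a * k₁ u v + b * k₂ u v) * y (delta v) u
    rw [hk₁, hk₂]
    ring

theorem of_norm_le_one {a b : W → ℂ} (ha : ∀ u, ‖a u‖ ≤ 1) (hb : ∀ v, ‖b v‖ ≤ 1) :
    IsSchurContraction fun u v => a u * b v := by
  have exists_diagonal (d : W → ℂ) (hd : ∀ w, ‖d w‖ ≤ 1) :
      ∃ D : Op W, ‖D‖ ≤ 1 ∧ ∀ (x : l2 W) w, D x w = d w * x w :=
    ⟨lp.mapCLM 2 (fun w => d w • ContinuousLinearMap.id ℂ ℂ) zero_le_one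
      fun w => by simpa [norm_smul] using hd w, lp.norm_mapCLM_le .., fun x w => by simp⟩
  intro y
  obtain ⟨D, hD, hDa⟩ := exists_diagonal a ha
  obtain ⟨E, hE, hEb⟩ := exists_diagonal b hb
  have hEdelta (v : W) : E (delta v) = b v • delta v := by
    ext w
    by_cases h : w = v <;> simp [hEb, delta_apply, h]
  refine ⟨D * y * E, ?_, fun u v => by simp [hDa, hEdelta, mul_assoc, mul_left_comm]⟩
  calc ‖D * y * E‖ ≤ ‖D‖ * ‖y‖ * ‖E‖ := norm_mul₃_le
    _ ≤ 1 * ‖y‖ * 1 := by gcongr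
    _ = ‖y‖ := by ring

theorem of_tendsto {ι : Type*} {l : Filter ι} [l.NeBot] {k : ι → W → W → ℂ} {k' : W → W → ℂ}
    (hk : ∀ i, IsSchurContraction (k i)) (hlim : ∀ u v, Tendsto (k · u v) l (𝓝 (k' u v))) :
    IsSchurContraction k' := by
  intro y
  choose z hz hkz using fun i => hk i y
  obtain ⟨z', hz', hzlim⟩ := exists_clm_tendsto_apply (Ultrafilter.of l) z hz
  refine ⟨z', hz', fun u v => tendsto_nhds_unique (hzlim (delta v) u) ?_⟩
  simpa only [hkz] using ((hlim u v).mono_left (Ultrafilter.of_le l)).mul_const _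

theorem of_partition (A : Set W) [DecidablePred (· ∈ A)] {κ : ℝ} (hκ : |κ| ≤ 1) :
    IsSchurContraction fun u v => if u ∈ A ↔ v ∈ A then 1 else (κ : ℂ) := by
  let σ (w : W) : ℂ := if w ∈ A then 1 else -1
  have hσ (w : W) : ‖σ w‖ ≤ 1 := by simp only [σ]; split_ifs <;> simp
  obtain ⟨hκ₀, hκ₁⟩ := abs_le.1 hκ
  have hcoeff : ‖((1 + κ) / 2 : ℂ)‖ + ‖((1 - κ) / 2 : ℂ)‖ ≤ 1 := by
    norm_cast
    rw [Real.norm_of_nonneg (by linarith), Real.norm_of_nonneg (by linarith)]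
    linarith
  convert one.smul_add_smul (of_norm_le_one hσ hσ) hcoeff using 3 with u v
  by_cases hu : u ∈ A <;> by_cases hv : v ∈ A <;> simp [σ, hu, hv] <;> ring

theorem pow_encard_symmDiff {I : Type*} (N : W → Set I) (n : W → W → ℕ)
    (hn : ∀ u v, (N u ∆ N v).encard = n u v) {κ : ℝ} (hκ : |κ| ≤ 1) :
    IsSchurContraction fun u v => (κ : ℂ) ^ n u v := by
  classical
  refine of_tendsto (l := atTop)
    (fun R : Finset I => prod (fun r => of_partition {w | r ∈ N w} hκ) R) fun u v => ?_
  have hfin : (N u ∆ N v).Finite := Set.finite_of_encard_eq_coe (hn u v)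
  have hcard : hfin.toFinset.card = n u v := by
    exact_mod_cast hfin.encard_eq_coe_toFinset_card.symm.trans (hn u v)
  have hmem (r : I) : r ∈ hfin.toFinset ↔ ¬(r ∈ N u ↔ r ∈ N v) := by
    rw [Set.Finite.mem_toFinset, Set.mem_symmDiff]
    tauto
  refine tendsto_const_nhds.congr' ?_
  filter_upwards [eventually_ge_atTop hfin.toFinset] with R hR
  simp only [Finset.prod_apply]
  rw [← Finset.prod_subset hR fun r _ hr => if_pos (by simpa [hmem] using hr),
    Finset.prod_congr rfl fun r hr => if_neg ((hmem r).1 hr), Finset.prod_const, hcard]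

end IsSchurContraction

/-! ### The Schur multiplier of a Coxeter system -/

variable {B : Type*} [Group W] {M : CoxeterMatrix B} {cs : CoxeterSystem M W} {κ : ℝ}

theorem isSchur_iff {y z : Op W} :
    IsSchur cs κ y z ↔
      ∀ u v, z (delta v) u = (κ : ℂ) ^ cs.length (u * v⁻¹) * y (delta v) u := by
  refine forall₂_congr fun u v => ?_
  rw [← (starRingEnd ℂ).injective.eq_iff, inner_delta, inner_delta, map_mul, map_pow,
    Complex.conj_ofReal, Complex.conj_conj, Complex.conj_conj]

theorem IsSchur.unique {y z z' : Op W} (hz : IsSchur cs κ y z) (hz' : IsSchur cs κ y z') :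
    z = z' := by
  refine op_ext_delta fun v => lp.ext (funext fun u => ?_)
  rw [isSchur_iff.1 hz, isSchur_iff.1 hz']

theorem IsSchur.sum {ι : Type*} {s : Finset ι} {y z : ι → Op W}
    (h : ∀ i ∈ s, IsSchur cs κ (y i) (z i)) : IsSchur cs κ (∑ i ∈ s, y i) (∑ i ∈ s, z i) := by
  intro u v
  simp only [sum_apply, sum_inner, Finset.mul_sum]
  exact Finset.sum_congr rfl fun i hi => h i hi u v

theorem isSchur_smul_of_apply_delta {y : Op W} {w : W} {c : W → ℂ}
    (hy : ∀ v, y (delta v) = c v • delta (w * v)) :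
    IsSchur cs κ y ((κ : ℂ) ^ cs.length w • y) := by
  refine isSchur_iff.2 fun u v => ?_
  by_cases h : u = w * v <;> simp [hy, delta_apply, h]

theorem exists_isSchur_norm_le (cs : CoxeterSystem M W) (hκ : |κ| ≤ 1) (y : Op W) :
    ∃ z : Op W, IsSchur cs κ y z ∧ ‖z‖ ≤ ‖y‖ := by
  obtain ⟨z, hz, hk⟩ := IsSchurContraction.pow_encard_symmDiff _ _
    (encard_symmDiff_isRightInversion cs) hκ y
  exact ⟨z, isSchur_iff.2 hk, hz⟩

theorem IsSchur.isCommutatorDS {x y C D : Op W} (hy : IsSchur cs κ x y)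
    (hC : IsCommutatorDS cs x C) (hD : IsSchur cs κ C D) : IsCommutatorDS cs y D := by
  intro v u
  rw [hD u v, hy u v, hC v u]
  ring

theorem schur_multiplier_of_Cc_general (cs : CoxeterSystem M W) (hκ : |κ| ≤ 1) {x C : Op W}
    (hC : IsCommutatorDS cs x C) :
    ∃ y D : Op W, IsSchur cs κ x y ∧ IsCommutatorDS cs y D ∧ IsSchur cs κ C D ∧ ‖D‖ ≤ ‖C‖ := by
  obtain ⟨y, hy, -⟩ := exists_isSchur_norm_le cs hκ x
  obtain ⟨D, hD, hDC⟩ := exists_isSchur_norm_le cs hκ C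
  exact ⟨y, D, hy, hy.isCommutatorDS hC hD, hD, hDC⟩

end Schur

/-- For x = Σ_{w∈F} f_w T_w^{(1)} ∈ C_c(W, ℓ∞(W)) and 0 < κ ≤ 1, the
Schur multiplier m_κ(x) exists and equals Σ_{w∈F} κ^{ℓ(w)} f_w T_w^{(1)}, the commutator
[D_S, m_κ(x)] exists and equals m_κ([D_S, x]), and ‖[D_S, m_κ(x)]‖ ≤ ‖[D_S, x]‖. -/
theorem schur_multiplier_of_Cc {B W : Type*} [Fintype B] [Group W] [DecidableEq W]
    {M : CoxeterMatrix B} (cs : CoxeterSystem M W)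
    (T1 : W → Op W) (hT1 : ∀ w v : W, T1 w (delta v) = delta (w * v))
    (f : W → W → ℂ) (F : Finset W)
    (Mf : W → Op W) (hMf : ∀ w v : W, Mf w (delta v) = f w v • delta v)
    (κ : ℝ) (hκ0 : 0 < κ) (hκ1 : κ ≤ 1)
    (C : Op W) (hC : IsCommutatorDS cs (∑ w ∈ F, Mf w * T1 w) C) :
    IsSchur cs κ (∑ w ∈ F, Mf w * T1 w)
      (∑ w ∈ F, ((κ : ℂ) ^ (cs.length w)) • (Mf w * T1 w)) ∧
    ∃ C' : Op W,
      IsCommutatorDS cs (∑ w ∈ F, ((κ : ℂ) ^ (cs.length w)) • (Mf w * T1 w)) C' ∧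
      IsSchur cs κ C C' ∧ ‖C'‖ ≤ ‖C‖ := by
  have hx := IsSchur.sum fun w (_ : w ∈ F) => isSchur_smul_of_apply_delta (cs := cs) (κ := κ)
    (y := Mf w * T1 w) (w := w) (c := fun v => f w (w * v)) fun v => by simp [hT1, hMf]
  obtain ⟨y, D, hy, hD⟩ := schur_multiplier_of_Cc_general cs (abs_le.2 ⟨by linarith, hκ1⟩) hC
  exact ⟨hx, D, hy.unique hx ▸ hD⟩
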